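/- Let V and W be finite-dimensional complex inner product spaces with dim V = c and dim W = r, and let B₁, B₂ ∈ End(V), i ∈ Hom(W,V), j ∈ Hom(V,W) satisfy [B₁,B₂] + i∘j = 0. Fix (z₁,z₂) ∈ ℂ² and suppose α(z₁,z₂) is injective and β(z₁,z₂) is surjective. Then the range of α(z₁,z₂) is contained in the kernel of β(z₁,z₂), and the quotient space ker β(z₁,z₂) / range α(z₁,z₂) has complex dimension r (this quotient is the fiber at (z₁,z₂) of the rank-r vector bundle produced by the ADHM construction). -/

import Mathlib

open LinearMap

/-- The ADHM map `α(z₁,z₂) : V → V ⊕ V ⊕ W`, `v ↦ ((B₁+z₁·1)v, (B₂+z₂·1)v, j v)`. -/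
noncomputable def adhmAlpha {V W : Type*} [AddCommGroup V] [Module ℂ V]
    [AddCommGroup W] [Module ℂ W]
    (B₁ B₂ : V →ₗ[ℂ] V) (j : V →ₗ[ℂ] W) (z₁ z₂ : ℂ) :
    V →ₗ[ℂ] V × V × W :=
  (B₁ + z₁ • LinearMap.id).prod ((B₂ + z₂ • LinearMap.id).prod j)

/-- The ADHM map `β(z₁,z₂) : V ⊕ V ⊕ W → V`, `(v₁,v₂,w) ↦ −(B₂+z₂·1)v₁ + (B₁+z₁·1)v₂ + i w`. -/
noncomputable def adhmBeta {V W : Type*} [AddCommGroup V] [Module ℂ V]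
    [AddCommGroup W] [Module ℂ W]
    (B₁ B₂ : V →ₗ[ℂ] V) (i : W →ₗ[ℂ] V) (z₁ z₂ : ℂ) :
    V × V × W →ₗ[ℂ] V :=
  (-(B₂ + z₂ • LinearMap.id)) ∘ₗ LinearMap.fst ℂ V (V × W)
    + (B₁ + z₁ • LinearMap.id) ∘ₗ ((LinearMap.fst ℂ V W) ∘ₗ (LinearMap.snd ℂ V (V × W)))
    + i ∘ₗ ((LinearMap.snd ℂ V W) ∘ₗ (LinearMap.snd ℂ V (V × W)))

/-- If `[B₁,B₂] + i∘j = 0` and, at a fixed `(z₁,z₂) ∈ ℂ²`, `α(z₁,z₂)` is injective and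
`β(z₁,z₂)` is surjective, then `range α(z₁,z₂) ⊆ ker β(z₁,z₂)` and the quotient
`ker β(z₁,z₂) / range α(z₁,z₂)` has complex dimension `r = dim W`: it is the fiber of the
rank-`r` bundle produced by the ADHM construction. -/
theorem adhm_fiber_dim
    {V W : Type*} [NormedAddCommGroup V] [InnerProductSpace ℂ V] [FiniteDimensional ℂ V]
    [NormedAddCommGroup W] [InnerProductSpace ℂ W] [FiniteDimensional ℂ W]
    (c r : ℕ) (hc : Module.finrank ℂ V = c) (hr : Module.finrank ℂ W = r)
    (B₁ B₂ : V →ₗ[ℂ] V) (i : W →ₗ[ℂ] V) (j : V →ₗ[ℂ] W)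
    (hADHM1 : B₁ ∘ₗ B₂ - B₂ ∘ₗ B₁ + i ∘ₗ j = 0)
    (z₁ z₂ : ℂ)
    (hinj : Function.Injective (adhmAlpha B₁ B₂ j z₁ z₂))
    (hsurj : Function.Surjective (adhmBeta B₁ B₂ i z₁ z₂)) :
    LinearMap.range (adhmAlpha B₁ B₂ j z₁ z₂) ≤ LinearMap.ker (adhmBeta B₁ B₂ i z₁ z₂)
    ∧ Module.finrank ℂ
        (↥(LinearMap.ker (adhmBeta B₁ B₂ i z₁ z₂)) ⧸
          Submodule.comap (LinearMap.ker (adhmBeta B₁ B₂ i z₁ z₂)).subtype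
            (LinearMap.range (adhmAlpha B₁ B₂ j z₁ z₂))) = r := by
  have hle : LinearMap.range (adhmAlpha B₁ B₂ j z₁ z₂) ≤
      LinearMap.ker (adhmBeta B₁ B₂ i z₁ z₂) := by
    rintro _ ⟨v, rfl⟩
    have h := LinearMap.congr_fun hADHM1 v
    simp only [LinearMap.add_apply, LinearMap.sub_apply, LinearMap.comp_apply,
      LinearMap.zero_apply] at h
    rw [LinearMap.mem_ker, ← h]
    simp only [adhmAlpha, adhmBeta, LinearMap.add_apply, LinearMap.comp_apply,
      LinearMap.neg_apply, LinearMap.prod_apply, Function.prod, LinearMap.fst_apply,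
      LinearMap.snd_apply, LinearMap.smul_apply, LinearMap.id_apply, map_add, map_smul,
      smul_add, smul_smul, mul_comm z₂ z₁]
    module
  refine ⟨hle, ?_⟩
  have h1 := Submodule.finrank_quotient_add_finrank
    (Submodule.comap (LinearMap.ker (adhmBeta B₁ B₂ i z₁ z₂)).subtype
      (LinearMap.range (adhmAlpha B₁ B₂ j z₁ z₂)))
  have h2 := (Submodule.comapSubtypeEquivOfLe hle).finrank_eq
  have h3 := LinearMap.finrank_range_of_inj hinj
  have h4 := LinearMap.finrank_range_add_finrank_ker (adhmBeta B₁ B₂ i z₁ z₂)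
  rw [LinearMap.range_eq_top.2 hsurj, finrank_top] at h4
  simp only [Module.finrank_prod] at h4
  omega
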